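/- Fix a positive integer n. There exists a constant c_n, depending only on n, such that every finite subgroup G of PGL_n(ℂ) contains a characteristic subgroup of index at most c_n which is diagonalizable. -/

import Mathlib

open Matrix

/-- The projective general linear group `PGL n K`, the quotient of `GL n K` by its
center (the nonzero scalar matrices). -/
abbrev PGL (n : ℕ) (K : Type*) [Field K] :=
  GL (Fin n) K ⧸ Subgroup.center (GL (Fin n) K)

/-- A subgroup `H` of `PGL n ℂ` is diagonalizable if its inverse image in
`GL n ℂ` is simultaneously diagonalizable: some `P ∈ GL n ℂ` conjugates every
element of the inverse image to a diagonal matrix. -/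
def IsDiagonalizableSubgroup {n : ℕ} (H : Subgroup (PGL n ℂ)) : Prop :=
  ∃ P : GL (Fin n) ℂ, ∀ g : GL (Fin n) ℂ,
    QuotientGroup.mk' (Subgroup.center (GL (Fin n) ℂ)) g ∈ H →
      Matrix.IsDiag ((P⁻¹ * g * P : GL (Fin n) ℂ) : Matrix (Fin n) (Fin n) ℂ)

/-- Joint eigenvectors of a commuting family of finite order endomorphisms span. -/
lemma span_joint_eigenvectors {V : Type*} [AddCommGroup V] [Module ℂ V] [FiniteDimensional ℂ V]
    {ι : Type*} (f : ι → Module.End ℂ V) (hc : ∀ i j, Commute (f i) (f j))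
    (hf : ∀ i, ∃ N : ℕ, 0 < N ∧ f i ^ N = 1) :
    Submodule.span ℂ {v : V | ∀ i, ∃ μ : ℂ, f i v = μ • v} = ⊤ := by
  have h1 := Module.End.iSup_iInf_maxGenEigenspace_eq_top_of_iSup_maxGenEigenspace_eq_top_of_commute
    f (fun i j _ => hc i j) (fun i => Module.End.iSup_maxGenEigenspace_eq_top (f i))
  rw [eq_top_iff, ← h1]
  refine iSup_le fun χ v hv => Submodule.subset_span fun i => ⟨χ i, ?_⟩
  obtain ⟨N, hN, hfN⟩ := hf i
  have hs : (f i).IsSemisimple := by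
    refine Module.End.isSemisimple_of_squarefree_aeval_eq_zero
      (p := Polynomial.X ^ N - Polynomial.C (1 : ℂ)) ?_ ?_
    · exact (Polynomial.separable_X_pow_sub_C (1 : ℂ) (by exact_mod_cast hN.ne')
        one_ne_zero).squarefree
    · simp [hfN]
  have hv' := (Submodule.mem_iInf _).1 hv i
  rw [hs.isFinitelySemisimple.maxGenEigenspace_eq_eigenspace] at hv'
  exact Module.End.mem_eigenspace_iff.1 hv'

section Unitary

variable {E : Type*} [NormedAddCommGroup E] [InnerProductSpace ℂ E] [FiniteDimensional ℂ E]

/-- Frobenius' lemma. -/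
lemma frobenius_commute {A B C : E →L[ℂ] E} (hA : A ∈ unitary (E →L[ℂ] E))
    (hB : B ∈ unitary (E →L[ℂ] E)) (hC : C ∈ unitary (E →L[ℂ] E))
    (hABC : A * B = C * B * A) (hAC : Commute A C)
    {N : ℕ} (hN : 0 < N) (hAN : A ^ N = 1) (hCN : C ^ N = 1) (hB1 : ‖B - 1‖ < 1) : C = 1 := by
  by_contra hne
  have iso : ∀ {T : E →L[ℂ] E}, T ∈ unitary (E →L[ℂ] E) → ∀ x y : E,
      inner ℂ (T x) (T y) = inner ℂ x y := by
    intro T hT x y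
    rw [← ContinuousLinearMap.adjoint_inner_right, ← ContinuousLinearMap.star_eq_adjoint,
      ← mul_apply_eq_comp, (Unitary.mem_iff.1 hT).1]
    rfl
  have isoN : ∀ {T : E →L[ℂ] E}, T ∈ unitary (E →L[ℂ] E) → ∀ x : E, ‖T x‖ = ‖x‖ := by
    intro T hT x
    rw [norm_eq_sqrt_re_inner (𝕜 := ℂ), iso hT, ← norm_eq_sqrt_re_inner]
  let f : Bool → Module.End ℂ E := fun b => if b then (A : E →ₗ[ℂ] E) else (C : E →ₗ[ℂ] E)
  have hpow : ∀ (T : E →L[ℂ] E), T ^ N = 1 → (T : E →ₗ[ℂ] E) ^ N = 1 := by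
    intro T hT
    ext x
    have := congrArg (fun S : E →L[ℂ] E => S x) hT
    simpa [Module.End.pow_apply] using this
  have hcom : Commute (A : E →ₗ[ℂ] E) (C : E →ₗ[ℂ] E) := by
    ext x
    exact congrArg (fun S : E →L[ℂ] E => S x) hAC.eq
  have hspan := span_joint_eigenvectors f
    (by
      intro i j
      cases i <;> cases j <;> simp only [f, if_true, if_false, Bool.false_eq_true]
      · exact Commute.refl _
      · exact hcom.symm
      · exact hcom
      · exact Commute.refl _)
    (by
      intro i
      refine ⟨N, hN, ?_⟩
      cases i
      · simpa [f] using hpow C hCN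
      · simpa [f] using hpow A hAN)
  -- a joint eigenvector not fixed by C
  obtain ⟨w, hw, hCw⟩ : ∃ w : E, (∀ i, ∃ μ : ℂ, f i w = μ • w) ∧ C w ≠ w := by
    by_contra hcon
    push Not at hcon
    apply hne
    have : (C : E →ₗ[ℂ] E) = LinearMap.id := by
      apply LinearMap.ext_on hspan
      intro v hv
      exact hcon v hv
    ext x
    exact congrArg (fun S : E →ₗ[ℂ] E => S x) this
  obtain ⟨l, hl⟩ := hw true
  obtain ⟨m, hm⟩ := hw false
  have hl' : A w = l • w := by simpa [f] using hl
  have hm' : C w = m • w := by simpa [f] using hm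
  have hw0 : w ≠ 0 := by rintro rfl; simp at hCw
  have hwn : ‖w‖ ≠ 0 := norm_ne_zero_iff.2 hw0
  have hl1 : ‖l‖ = 1 := by
    have := isoN hA w
    rw [hl', norm_smul] at this
    exact mul_right_cancel₀ hwn (by rw [this, one_mul])
  have hm1 : ‖m‖ = 1 := by
    have := isoN hC w
    rw [hm', norm_smul] at this
    exact mul_right_cancel₀ hwn (by rw [this, one_mul])
  have hmne : m ≠ 1 := by rintro rfl; simp [hm'] at hCw
  have hm0 : m ≠ 0 := by rintro rfl; simp at hm1
  have hl0 : l ≠ 0 := by rintro rfl; simp at hl1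
  set v : E := (star B) w with hv
  have hBv : B v = w := by
    rw [hv, ← mul_apply_eq_comp, (Unitary.mem_iff.1 hB).2]; rfl
  have injB : ∀ x y : E, B x = B y → x = y := by
    intro x y h
    rw [← sub_eq_zero, ← norm_eq_zero, ← isoN hB, map_sub, h, sub_self, norm_zero]
  have injC : ∀ x y : E, C x = C y → x = y := by
    intro x y h
    rw [← sub_eq_zero, ← norm_eq_zero, ← isoN hC, map_sub, h, sub_self, norm_zero]
  have hAv : A v = (m⁻¹ * l) • v := by
    apply injB
    apply injC
    have := congrArg (fun S : E →L[ℂ] E => S v) hABC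
    simp only [mul_apply_eq_comp] at this
    rw [← this, hBv, hl', map_smul, map_smul, hBv, hm', smul_smul]
    congr 1
    field_simp
  have horth : inner ℂ v w = (0 : ℂ) := by
    have h := iso hA v w
    rw [hAv, hl', inner_smul_left, inner_smul_right, map_mul] at h
    have hll : (starRingEnd ℂ) l * l = 1 := by
      rw [← Complex.normSq_eq_conj_mul_self, Complex.normSq_eq_norm_sq, hl1]; simp
    have hmm : (starRingEnd ℂ) m * m = 1 := by
      rw [← Complex.normSq_eq_conj_mul_self, Complex.normSq_eq_norm_sq, hm1]; simp
    have hmi : (starRingEnd ℂ) m⁻¹ = m := by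
      rw [map_inv₀]; exact (eq_inv_of_mul_eq_one_right hmm).symm
    rw [hmi] at h
    have h2 : (m - 1) * inner ℂ v w = 0 := by
      linear_combination h - m * inner ℂ v w * hll
    exact (mul_eq_zero.1 h2).resolve_left (sub_ne_zero.2 hmne)
  have hv0 : 0 < ‖v‖ := by rw [← isoN hB, hBv]; exact norm_pos_iff.2 hw0
  have h1 : ‖w - v‖ < ‖v‖ := by
    calc ‖w - v‖ = ‖(B - 1) v‖ := by simp [hBv]
      _ ≤ ‖B - 1‖ * ‖v‖ := ContinuousLinearMap.le_opNorm _ _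
      _ < 1 * ‖v‖ := by gcongr
      _ = ‖v‖ := one_mul _
  have h2 : ‖w - v‖ ^ 2 = ‖w‖ ^ 2 + ‖v‖ ^ 2 := by
    rw [norm_sub_sq (𝕜 := ℂ), inner_eq_zero_symm.1 horth]
    simp
  nlinarith [norm_nonneg (w - v), norm_nonneg w]

lemma norm_le_one_of_mem_unitary {T : E →L[ℂ] E} (hT : T ∈ unitary (E →L[ℂ] E)) : ‖T‖ ≤ 1 := by
  rw [← mul_one T, CStarRing.norm_mem_unitary_mul _ hT]
  exact ContinuousLinearMap.norm_id_le

/-- Jordan's theorem for finite unitary groups. -/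
lemma jordan_unitary {G : Type*} [Group G] [Finite G] (ρ : G →* unitary (E →L[ℂ] E))
    (hρ : Function.Injective ρ) :
    ∃ A : Subgroup G, (∀ a ∈ A, ∀ b ∈ A, a * b = b * a) ∧
      A.index ≤ 5 ^ Module.finrank ℝ (E →L[ℂ] E) := by
  classical
  let r : G → E →L[ℂ] E := fun g => (ρ g : E →L[ℂ] E)
  have r_mul : ∀ g h, r (g * h) = r g * r h := fun g h => by simp [r]
  have r_one : r 1 = 1 := by simp [r]
  have r_pow : ∀ g (k : ℕ), r (g ^ k) = r g ^ k := fun g k => by simp [r]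
  have r_inj : Function.Injective r := Subtype.val_injective.comp hρ
  have r_u : ∀ g, r g ∈ unitary (E →L[ℂ] E) := fun g => (ρ g).2
  have r_le : ∀ g, ‖r g‖ ≤ 1 := fun g => norm_le_one_of_mem_unitary (r_u g)
  have r_mulnorm : ∀ g T, ‖r g * T‖ = ‖T‖ := fun g T => CStarRing.norm_coe_unitary_mul (ρ g) T
  have r_normmul : ∀ T g, ‖T * r g‖ = ‖T‖ := fun T g => CStarRing.norm_mul_coe_unitary T (ρ g)
  let S : Set G := {g | ‖r g - 1‖ < 1 / 2}
  -- commutator estimate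
  have hcomm : ∀ g h : G, ‖r (g * h * g⁻¹ * h⁻¹) - 1‖ ≤ 2 * ‖r g - 1‖ * ‖r h - 1‖ := by
    intro g h
    have h1 : (r (g * h * g⁻¹ * h⁻¹) - 1) * r (h * g) =
        (r g - 1) * (r h - 1) - (r h - 1) * (r g - 1) := by
      rw [sub_mul, ← r_mul, show g * h * g⁻¹ * h⁻¹ * (h * g) = g * h by group, r_mul, r_mul]
      noncomm_ring
    rw [← r_normmul _ (h * g), h1]
    calc _ ≤ ‖(r g - 1) * (r h - 1)‖ + ‖(r h - 1) * (r g - 1)‖ := norm_sub_le _ _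
      _ ≤ ‖r g - 1‖ * ‖r h - 1‖ + ‖r h - 1‖ * ‖r g - 1‖ :=
        add_le_add (norm_mul_le _ _) (norm_mul_le _ _)
      _ = _ := by ring
  have key : ∀ g ∈ S, ∀ h ∈ S, g * h = h * g := by
    intro g hg
    by_contra hcon
    push Not at hcon
    obtain ⟨h, ⟨hh, hne⟩, hmin⟩ := Set.exists_min_image {h : G | h ∈ S ∧ g * h ≠ h * g}
      (fun h => ‖r h - 1‖) (Set.toFinite _) hcon
    have hpos : 0 < ‖r h - 1‖ := by
      rw [norm_pos_iff, sub_ne_zero]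
      intro h1
      have : h = 1 := r_inj (h1.trans r_one.symm)
      simp [this] at hne
    have hlt : ‖r (g * h * g⁻¹ * h⁻¹) - 1‖ < ‖r h - 1‖ := by
      refine (hcomm g h).trans_lt ?_
      have : ‖r g - 1‖ < 1 / 2 := hg
      nlinarith
    have hcS : g * h * g⁻¹ * h⁻¹ ∈ S := hlt.trans hh
    have hgc : g * (g * h * g⁻¹ * h⁻¹) = (g * h * g⁻¹ * h⁻¹) * g := by
      by_contra hx
      exact absurd (hmin _ ⟨hcS, hx⟩) (not_le.2 hlt)
    have hfin : r (g * h * g⁻¹ * h⁻¹) = 1 := by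
      refine frobenius_commute (A := r g) (B := r h) (r_u _) (r_u _) (r_u _) ?_ ?_
        (N := Nat.card G) Nat.card_pos ?_ ?_ ?_
      · rw [← r_mul, ← r_mul, ← r_mul]
        congr 1
        group
      · rw [Commute, SemiconjBy, ← r_mul, ← r_mul, hgc]
      · rw [← r_pow, pow_card_eq_one', r_one]
      · rw [← r_pow, pow_card_eq_one', r_one]
      · have : ‖r h - 1‖ < 1 / 2 := hh
        linarith
    have : g * h * g⁻¹ * h⁻¹ = 1 := r_inj (hfin.trans r_one.symm)
    apply hne
    rw [mul_inv_eq_one, mul_inv_eq_iff_eq_mul] at this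
    exact this
  refine ⟨Subgroup.closure S, ?_, ?_⟩
  · have := Subgroup.isMulCommutative_closure key
    intro a ha b hb
    exact congrArg Subtype.val (this.is_comm.comm (⟨a, ha⟩ : Subgroup.closure S) ⟨b, hb⟩)
  · have : Fintype (G ⧸ Subgroup.closure S) := Fintype.ofFinite _
    let φ : G ⧸ Subgroup.closure S → E →L[ℂ] E := fun q => (2 : ℝ) • r q.out
    have hsep : ∀ p q, p ≠ q → 1 ≤ ‖φ p - φ q‖ := by
      intro p q hpq
      by_contra hlt
      push Not at hlt
      apply hpq
      rw [← Quotient.out_eq p, ← Quotient.out_eq q]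
      refine Quotient.sound ?_
      apply QuotientGroup.leftRel_apply.2
      apply Subgroup.subset_closure
      change ‖r _ - 1‖ < 1 / 2
      rw [← r_mulnorm p.out, mul_sub, ← r_mul, mul_inv_cancel_left, mul_one, norm_sub_rev]
      have : φ p - φ q = (2 : ℝ) • (r p.out - r q.out) := by rw [smul_sub]
      rw [this, norm_smul, Real.norm_eq_abs, abs_two] at hlt
      linarith
    have hinj : Function.Injective φ := by
      intro p q hpq
      by_contra hne
      have := hsep p q hne
      rw [hpq, sub_self, norm_zero] at this
      linarith
    have := Besicovitch.card_le_of_separated (Finset.univ.image φ)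
      (by
        intro c hc
        obtain ⟨q, -, rfl⟩ := Finset.mem_image.1 hc
        simp only [φ]
        rw [norm_smul, Real.norm_eq_abs, abs_two]
        linarith [r_le q.out])
      (by
        intro c hc d hd hcd
        obtain ⟨p, -, rfl⟩ := Finset.mem_image.1 hc
        obtain ⟨q, -, rfl⟩ := Finset.mem_image.1 hd
        exact hsep p q (fun h => hcd (by rw [h])))
    rw [Finset.card_image_of_injective _ hinj, Finset.card_univ] at this
    rwa [Subgroup.index, Nat.card_eq_fintype_card]

end Unitary

/-- The constant of Jordan's theorem. -/
noncomputable def jordanConst (n : ℕ) : ℕ :=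
  5 ^ Module.finrank ℝ (EuclideanSpace ℂ (Fin n) →L[ℂ] EuclideanSpace ℂ (Fin n))

open scoped ComplexOrder MatrixOrder Matrix.Norms.L2Operator in
/-- A finite linear group can be made unitary. -/
lemma exists_unitarize {n : ℕ} (H : Subgroup (GL (Fin n) ℂ)) [Finite H] :
    ∃ S : GL (Fin n) ℂ, ∀ h ∈ H,
      ((S * h * S⁻¹ : GL (Fin n) ℂ) : Matrix (Fin n) (Fin n) ℂ) ∈
        unitary (Matrix (Fin n) (Fin n) ℂ) := by
  classical
  have : Fintype H := Fintype.ofFinite _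
  let M : Matrix (Fin n) (Fin n) ℂ :=
    ∑ h : H, star (h : GL (Fin n) ℂ).val * (h : GL (Fin n) ℂ).val
  have hM : M.PosDef := by
    refine Matrix.posDef_sum ⟨1, Finset.mem_univ _⟩ fun h _ => ?_
    apply Matrix.PosDef.conjTranspose_mul_self
    exact Matrix.mulVec_injective_of_isUnit (h : GL (Fin n) ℂ).isUnit
  obtain ⟨S, hS⟩ : ∃ S : GL (Fin n) ℂ, M = star S.val * S.val := by
    obtain ⟨y, hy, h⟩ := CStarAlgebra.isStrictlyPositive_iff_eq_star_mul_self.mp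
        hM.isStrictlyPositive
    exact ⟨hy.unit, h⟩
  refine ⟨S, fun h hh => ?_⟩
  have hinv : star h.val * M * h.val = M := by
    simp only [M, Finset.mul_sum, Finset.sum_mul]
    refine Fintype.sum_equiv (Equiv.mulRight (⟨h, hh⟩ : H)) _ _ fun g => ?_
    simp [mul_assoc]
  have h1 : star ((S * h * S⁻¹ : GL (Fin n) ℂ) : Matrix (Fin n) (Fin n) ℂ) *
      ((S * h * S⁻¹ : GL (Fin n) ℂ) : Matrix (Fin n) (Fin n) ℂ) = 1 := by
    have e1 : (S.val : Matrix (Fin n) (Fin n) ℂ) * (S⁻¹ : GL (Fin n) ℂ).val = 1 := S.mul_inv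
    rw [Units.val_mul, Units.val_mul, star_mul, star_mul]
    calc _ = star (S⁻¹ : GL (Fin n) ℂ).val * (star h.val * (star S.val * S.val) * h.val) *
          (S⁻¹ : GL (Fin n) ℂ).val := by simp only [mul_assoc]
      _ = star (S⁻¹ : GL (Fin n) ℂ).val * (star S.val * S.val) *
          (S⁻¹ : GL (Fin n) ℂ).val := by rw [← hS, hinv]
      _ = star (S.val * (S⁻¹ : GL (Fin n) ℂ).val) * (S.val * (S⁻¹ : GL (Fin n) ℂ).val) := by
          rw [star_mul]; simp only [mul_assoc]
      _ = 1 := by rw [e1, star_one, one_mul]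
  exact Unitary.mem_iff.2 ⟨h1, mul_eq_one_comm.1 h1⟩

/-- Jordan's theorem. -/
lemma jordan_GL {n : ℕ} (H : Subgroup (GL (Fin n) ℂ)) [Finite H] :
    ∃ A : Subgroup H, (∀ a ∈ A, ∀ b ∈ A, a * b = b * a) ∧ A.index ≤ jordanConst n := by
  obtain ⟨S, hS⟩ := exists_unitarize H
  let e := Matrix.toEuclideanCLM (n := Fin n) (𝕜 := ℂ)
  let ρ : H →* unitary (EuclideanSpace ℂ (Fin n) →L[ℂ] EuclideanSpace ℂ (Fin n)) :=
    { toFun := fun h => ⟨e ((S * h * S⁻¹ : GL (Fin n) ℂ) : Matrix (Fin n) (Fin n) ℂ),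
        Unitary.map_mem e (hS h h.2)⟩
      map_one' := by
        apply Subtype.ext
        simp
      map_mul' := by
        intro g h
        apply Subtype.ext
        change e _ = e _ * e _
        rw [← map_mul, ← Units.val_mul]
        congr 2
        simp [mul_assoc] }
  refine jordan_unitary ρ ?_
  intro g h hgh
  have h1 := congrArg Subtype.val hgh
  have h2 := e.injective h1
  have h3 := Units.ext h2
  apply Subtype.ext
  simpa using h3

/-- Simultaneous diagonalization of commuting finite order matrices. -/
lemma exists_simul_diag {n : ℕ} {ι : Type*} (A : ι → GL (Fin n) ℂ)
    (hc : ∀ i j, A i * A j = A j * A i) (hf : ∀ i, ∃ N : ℕ, 0 < N ∧ A i ^ N = 1) :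
    ∃ P : GL (Fin n) ℂ, ∀ i,
      Matrix.IsDiag ((P⁻¹ * A i * P : GL (Fin n) ℂ) : Matrix (Fin n) (Fin n) ℂ) := by
  have hspan := span_joint_eigenvectors (fun i => Matrix.toLin' (A i).val)
    (by
      intro i j
      rw [Commute, SemiconjBy, Module.End.mul_eq_comp, Module.End.mul_eq_comp,
        ← Matrix.toLin'_mul, ← Matrix.toLin'_mul, ← Units.val_mul, hc, Units.val_mul])
    (by
      intro i
      obtain ⟨N, hN, h⟩ := hf i
      refine ⟨N, hN, ?_⟩
      rw [← Matrix.toLin'_pow, ← Units.val_pow_eq_pow_val, h]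
      simp [Module.End.one_eq_id])
  let b₀ := Module.Basis.ofSpan hspan.ge
  have hb₀ : ∀ k, b₀ k ∈ {v : Fin n → ℂ | ∀ i, ∃ μ : ℂ, Matrix.toLin' (A i).val v = μ • v} := by
    intro k
    exact Module.Basis.ofSpan_subset hspan.ge ⟨k, rfl⟩
  let b := b₀.reindex (b₀.indexEquiv (Pi.basisFun ℂ (Fin n)))
  have hb : ∀ k i, ∃ μ : ℂ, (A i).val *ᵥ (b k) = μ • b k := by
    intro k i
    obtain ⟨μ, h⟩ := hb₀ ((b₀.indexEquiv (Pi.basisFun ℂ (Fin n))).symm k) i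
    refine ⟨μ, ?_⟩
    rw [Module.Basis.reindex_apply]
    simpa using h
  let := (Pi.basisFun ℂ (Fin n)).invertibleToMatrix b
  let P : GL (Fin n) ℂ := unitOfInvertible ((Pi.basisFun ℂ (Fin n)).toMatrix b)
  have hP : ∀ i j, P.val i j = b j i := by
    intro i j
    simp [P, Module.Basis.toMatrix_apply]
  refine ⟨P, fun i => ?_⟩
  choose μ hμ using fun k => hb k i
  have h1 : (A i).val * P.val = P.val * Matrix.diagonal μ := by
    ext k l
    have := congrFun (hμ l) k
    rw [Matrix.mul_diagonal, hP, mul_comm]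
    simp only [Matrix.mul_apply, hP]
    exact this
  have h2 : ((P⁻¹ * A i * P : GL (Fin n) ℂ) : Matrix (Fin n) (Fin n) ℂ) = Matrix.diagonal μ := by
    rw [Units.val_mul, Units.val_mul, mul_assoc, h1, ← mul_assoc, Units.inv_mul, one_mul]
  rw [h2]
  exact Matrix.isDiag_diagonal μ

/-- Two lifts differ by a scalar. -/
lemma lifts_scalar {n : ℕ} {g h : GL (Fin n) ℂ}
    (hgh : QuotientGroup.mk' (Subgroup.center (GL (Fin n) ℂ)) g =
      QuotientGroup.mk' (Subgroup.center (GL (Fin n) ℂ)) h) :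
    ∃ c : ℂˣ, h = g * Matrix.GeneralLinearGroup.scalar (Fin n) c := by
  have h1 : g⁻¹ * h ∈ Subgroup.center (GL (Fin n) ℂ) := QuotientGroup.eq.1 hgh
  rw [Matrix.GeneralLinearGroup.center_eq_range_scalar] at h1
  obtain ⟨c, hc⟩ := h1
  exact ⟨c, by rw [hc]; group⟩

lemma mk_scalar {n : ℕ} (g : GL (Fin n) ℂ) (c : ℂˣ) :
    QuotientGroup.mk' (Subgroup.center (GL (Fin n) ℂ))
      (g * Matrix.GeneralLinearGroup.scalar (Fin n) c) =
    QuotientGroup.mk' (Subgroup.center (GL (Fin n) ℂ)) g := by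
  rw [map_mul]
  have : Matrix.GeneralLinearGroup.scalar (Fin n) c ∈ Subgroup.center (GL (Fin n) ℂ) := by
    rw [Matrix.GeneralLinearGroup.center_eq_range_scalar]
    exact ⟨c, rfl⟩
  rw [show QuotientGroup.mk' (Subgroup.center (GL (Fin n) ℂ))
    (Matrix.GeneralLinearGroup.scalar (Fin n) c) = 1 from (QuotientGroup.eq_one_iff _).2 this,
    mul_one]

lemma exists_units_root (m : ℕ) (hm : 0 < m) (d : ℂˣ) : ∃ c : ℂˣ, c ^ m = d := by
  obtain ⟨z, hz⟩ := IsAlgClosed.exists_pow_nat_eq (d : ℂ) hm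
  have hz0 : z ≠ 0 := by
    rintro rfl
    rw [zero_pow hm.ne'] at hz
    exact d.ne_zero hz.symm
  exact ⟨Units.mk0 z hz0, Units.ext (by simpa using hz)⟩

lemma exists_det_one_lift {n : ℕ} (hn : 0 < n) (x : PGL n ℂ) :
    ∃ g : GL (Fin n) ℂ, Matrix.GeneralLinearGroup.det g = 1 ∧
      QuotientGroup.mk' (Subgroup.center (GL (Fin n) ℂ)) g = x := by
  obtain ⟨g, rfl⟩ := QuotientGroup.mk'_surjective _ x
  obtain ⟨c, hc⟩ := exists_units_root n hn (Matrix.GeneralLinearGroup.det g)⁻¹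
  refine ⟨g * Matrix.GeneralLinearGroup.scalar (Fin n) c, ?_, mk_scalar g c⟩
  rw [map_mul, Matrix.GeneralLinearGroup.det_scalar, Fintype.card_fin, hc, mul_inv_cancel]

/-- A finite projective group contains a diagonalizable subgroup of bounded index. -/
lemma jordan_PGL {n : ℕ} (hn : 0 < n) (G : Subgroup (PGL n ℂ)) [Finite G] :
    ∃ D : Subgroup G, D.index ≤ jordanConst n ∧ (∀ a ∈ D, ∀ b ∈ D, a * b = b * a) ∧
      IsDiagonalizableSubgroup (D.map G.subtype) := by
  have : NeZero n := ⟨hn.ne'⟩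
  choose s hs1 hs2 using exists_det_one_lift (n := n) hn
  let L : Subgroup (GL (Fin n) ℂ) :=
    G.comap (QuotientGroup.mk' (Subgroup.center (GL (Fin n) ℂ))) ⊓
      (Matrix.GeneralLinearGroup.det (n := Fin n) (R := ℂ)).ker
  have hL : Finite L := by
    have hfin : (Set.range fun p : G × rootsOfUnity n ℂ =>
      s p.1 * Matrix.GeneralLinearGroup.scalar (Fin n) (p.2 : ℂˣ)).Finite := Set.finite_range _
    refine (hfin.subset ?_ : (L : Set (GL (Fin n) ℂ)).Finite)
    rintro g ⟨hg1, hg2⟩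
    obtain ⟨c, hc⟩ := lifts_scalar (hs2 (QuotientGroup.mk' _ g))
    have hdet : Matrix.GeneralLinearGroup.det g = 1 := hg2
    refine ⟨(⟨_, hg1⟩, ⟨c, ?_⟩), hc.symm⟩
    rw [hc, map_mul, hs1, one_mul, Matrix.GeneralLinearGroup.det_scalar, Fintype.card_fin] at hdet
    exact (mem_rootsOfUnity _ _).2 hdet
  let φ : L →* G := ((QuotientGroup.mk' (Subgroup.center (GL (Fin n) ℂ))).comp
    L.subtype).codRestrict G (fun g => g.2.1)
  have hφ : ∀ g : L, (φ g : PGL n ℂ) = QuotientGroup.mk' _ (g : GL (Fin n) ℂ) := fun g => rfl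
  have hsurj : Function.Surjective φ := by
    intro x
    refine ⟨⟨s x, ?_, hs1 x⟩, ?_⟩
    · change QuotientGroup.mk' _ (s x) ∈ G
      rw [hs2]
      exact x.2
    · apply Subtype.ext
      rw [hφ]
      exact hs2 x
  obtain ⟨A, hA1, hA2⟩ := jordan_GL L
  refine ⟨A.map φ, ?_, ?_, ?_⟩
  · exact (Nat.le_of_dvd (Nat.pos_of_ne_zero A.index_ne_zero_of_finite)
      (A.index_map_dvd hsurj)).trans hA2
  · rintro _ ⟨a, ha, rfl⟩ _ ⟨b, hb, rfl⟩
    rw [← map_mul, hA1 a ha b hb, map_mul]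
  · obtain ⟨P, hP⟩ := exists_simul_diag (fun a : A => ((a : L) : GL (Fin n) ℂ))
      (by
        intro a b
        exact congrArg Subtype.val (hA1 a a.2 b b.2))
      (by
        intro a
        refine ⟨Nat.card L, Nat.card_pos, ?_⟩
        exact congrArg Subtype.val (pow_card_eq_one' (x := (a : L))))
    refine ⟨P, ?_⟩
    rintro g ⟨_, ⟨a, ha, rfl⟩, hg⟩
    obtain ⟨c, rfl⟩ := lifts_scalar (g := (a : GL (Fin n) ℂ)) (h := g) hg
    intro i j hij
    have := hP ⟨a, ha⟩ hij
    have e : P⁻¹ * (a * Matrix.GeneralLinearGroup.scalar (Fin n) c) * P =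
        (P⁻¹ * a * P) * Matrix.GeneralLinearGroup.scalar (Fin n) c := by
      have hcen : Matrix.GeneralLinearGroup.scalar (Fin n) c ∈ Subgroup.center (GL (Fin n) ℂ) := by
        rw [Matrix.GeneralLinearGroup.center_eq_range_scalar]
        exact ⟨c, rfl⟩
      have := Subgroup.mem_center_iff.1 hcen P
      rw [mul_assoc, mul_assoc _ _ P, ← this]
      group
    rw [e, Units.val_mul]
    have e2 : (Matrix.GeneralLinearGroup.scalar (Fin n) c).val =
      Matrix.diagonal fun _ : Fin n => (c : ℂ) := rfl
    rw [e2, Matrix.mul_diagonal, this, zero_mul]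

/-- The torsion of a diagonalizable subgroup is bounded. -/
lemma card_torsion_le {n : ℕ} (D : Subgroup (PGL n ℂ)) (hD : IsDiagonalizableSubgroup D)
    (m : ℕ) (hm : 0 < m) :
    Nat.card {x : PGL n ℂ // x ∈ D ∧ x ^ m = 1} ≤ m ^ n := by
  have : NeZero m := ⟨hm.ne'⟩
  obtain ⟨P, hP⟩ := hD
  have key : ∀ x : {x : PGL n ℂ // x ∈ D ∧ x ^ m = 1}, ∃ w : Fin n → rootsOfUnity m ℂ,
      ∃ g : GL (Fin n) ℂ, QuotientGroup.mk' (Subgroup.center (GL (Fin n) ℂ)) g = x.1 ∧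
        (P⁻¹ * g * P).val = Matrix.diagonal fun i => ((w i : ℂˣ) : ℂ) := by
    rintro ⟨x, hxD, hxm⟩
    obtain ⟨g, rfl⟩ := QuotientGroup.mk'_surjective _ x
    obtain ⟨c, hc⟩ := lifts_scalar (g := 1) (h := g ^ m) (by rw [map_pow, hxm, map_one])
    obtain ⟨d, hd⟩ := exists_units_root m hm c⁻¹
    set g' := g * Matrix.GeneralLinearGroup.scalar (Fin n) d with hg'
    have hmk := mk_scalar g d
    rw [← hg'] at hmk
    have hpow : g' ^ m = 1 := by
      have hcen : Matrix.GeneralLinearGroup.scalar (Fin n) d ∈ Subgroup.center (GL (Fin n) ℂ) := by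
        rw [Matrix.GeneralLinearGroup.center_eq_range_scalar]
        exact ⟨d, rfl⟩
      have hcom : Commute g (Matrix.GeneralLinearGroup.scalar (Fin n) d) :=
        Subgroup.mem_center_iff.1 hcen g
      rw [hg', hcom.mul_pow, hc, ← map_pow, hd, one_mul, ← map_mul, mul_inv_cancel, map_one]
    have hdiag := hP g' (by rw [hmk]; exact hxD)
    rw [Matrix.isDiag_iff_diagonal_diag] at hdiag
    have hpow2 : (P⁻¹ * g' * P).val ^ m = 1 := by
      have := conj_pow (i := m) (a := P⁻¹) (b := g')
      rw [inv_inv, hpow] at this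
      rw [← Units.val_pow_eq_pow_val, this]
      simp
    rw [← hdiag, Matrix.diagonal_pow, ← Matrix.diagonal_one] at hpow2
    have hroot := fun i => congrFun (Matrix.diagonal_injective hpow2) i
    refine ⟨fun i => rootsOfUnity.mkOfPowEq (((P⁻¹ * g' * P).val).diag i) (hroot i), g', hmk, ?_⟩
    refine hdiag.symm.trans ?_
    simp
  choose w g hg1 hg2 using key
  have hinj : Function.Injective w := by
    intro x y hxy
    apply Subtype.ext
    rw [← hg1 x, ← hg1 y]
    congr 1
    have hval : (P⁻¹ * g x * P).val = (P⁻¹ * g y * P).val := by rw [hg2 x, hg2 y, hxy]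
    have := Units.ext hval
    simpa using this
  refine (Nat.card_le_card_of_injective w hinj).trans ?_
  rw [Nat.card_fun, Nat.card_fin]
  apply Nat.pow_le_pow_left
  exact card_rootsOfUnity ℂ m

/-- for every `n > 0` there is a constant `c` such that every
finite subgroup `G` of `PGL n ℂ` has a characteristic, diagonalizable subgroup
of index at most `c`. -/
theorem exists_characteristic_diagonalizable_subgroup (n : ℕ) (hn : 0 < n) :
    ∃ c : ℕ, ∀ (G : Subgroup (PGL n ℂ)), Finite G →
      ∃ C : Subgroup G, C.Characteristic ∧ C.index ≤ c ∧
        IsDiagonalizableSubgroup (C.map G.subtype) := by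
  set m := (jordanConst n).factorial with hm
  have hmpos : 0 < m := Nat.factorial_pos _
  refine ⟨m ^ n * jordanConst n, fun G hG => ?_⟩
  obtain ⟨D, hDi, hDc, hDd⟩ := jordan_PGL hn G
  let C : Subgroup G := Subgroup.closure (Set.range fun g : G => g ^ m)
  have hCD : C ≤ D := by
    rw [Subgroup.closure_le]
    rintro _ ⟨g, rfl⟩
    obtain ⟨k, hk0, hk, hgk⟩ := Subgroup.exists_pow_mem_of_index_ne_zero
      D.index_ne_zero_of_finite g
    obtain ⟨l, hl⟩ : k ∣ m := Nat.dvd_factorial hk0 (hk.trans hDi)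
    change g ^ m ∈ D
    rw [hl, pow_mul]
    exact D.pow_mem hgk l
  refine ⟨C, ?_, ?_, ?_⟩
  · rw [Subgroup.characteristic_iff_map_le]
    intro φ
    rw [MonoidHom.map_closure, Subgroup.closure_le]
    rintro _ ⟨_, ⟨g, rfl⟩, rfl⟩
    apply Subgroup.subset_closure
    exact ⟨φ g, by simp⟩
  · rw [← Subgroup.relIndex_mul_index hCD]
    refine Nat.mul_le_mul ?_ hDi
    let : CommGroup D := { (inferInstance : Group D) with
      mul_comm := fun a b => Subtype.ext (hDc a a.2 b b.2) }
    have hle : (powMonoidHom m : D →* D).range ≤ C.subgroupOf D := by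
      rintro _ ⟨x, rfl⟩
      rw [Subgroup.mem_subgroupOf]
      exact Subgroup.subset_closure ⟨x, rfl⟩
    have h1 : C.relIndex D ≤ (powMonoidHom m : D →* D).range.index :=
      Nat.le_of_dvd (Nat.pos_of_ne_zero (Subgroup.index_ne_zero_of_finite))
        (Subgroup.index_dvd_of_le hle)
    refine h1.trans ?_
    rw [Subgroup.index_range]
    have hfin : Finite {x : PGL n ℂ // x ∈ D.map G.subtype ∧ x ^ m = 1} := by
      have : ((G : Set (PGL n ℂ))).Finite := hG
      refine (this.subset ?_ : {x : PGL n ℂ | x ∈ D.map G.subtype ∧ x ^ m = 1}.Finite)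
      rintro _ ⟨⟨y, _, rfl⟩, _⟩
      exact y.2
    refine le_trans ?_ (card_torsion_le (D.map G.subtype) hDd m hmpos)
    refine Nat.card_le_card_of_injective
      (fun x : (powMonoidHom m : D →* D).ker =>
        (⟨((x : D) : G), ⟨((x : D) : G), (x : D).2, rfl⟩, ?_⟩ :
          {x : PGL n ℂ // x ∈ D.map G.subtype ∧ x ^ m = 1})) ?_
    · have hx : (x : D) ^ m = 1 := x.2
      have := congrArg (fun y : D => ((y : G) : PGL n ℂ)) hx
      exact this
    · intro x y hxy
      have h := congrArg Subtype.val hxy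
      exact Subtype.ext (Subtype.ext (Subtype.ext h))
  · obtain ⟨P, hP⟩ := hDd
    exact ⟨P, fun g hg => hP g (Subgroup.map_mono hCD hg)⟩
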